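/- arXiv:0812.1904 — 2 statements merged into one kernel-verified Lean document; each statement's English description precedes it below -/
import Mathlib

section
/- If X ⊂ P^r is a non-degenerate variety and dim(J(X^k)) = dim(J(X^{k+1})), then J(X^k) = P^r. Similarly, if dim(S^k(X)) = dim(S^{k-1}(X)), then S^k(X) = P^r. -/
open MvPolynomial Classical

noncomputable section

/-- A subset of affine space is algebraic if it is the zero locus of a set of polynomials. -/
def IsAlg {N : ℕ} (S : Set (Fin N → ℂ)) : Prop :=
  ∃ I : Set (MvPolynomial (Fin N) ℂ), S = {x | ∀ f ∈ I, eval x f = 0}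

/-- Zariski closure. -/
def zcl {N : ℕ} (S : Set (Fin N → ℂ)) : Set (Fin N → ℂ) :=
  ⋂₀ {T | IsAlg T ∧ S ⊆ T}

/-- Affine cones (over projective sets). -/
def IsCone {N : ℕ} (S : Set (Fin N → ℂ)) : Prop :=
  (0 : Fin N → ℂ) ∈ S ∧ ∀ c : ℂ, ∀ x ∈ S, c • x ∈ S

/-- Irreducible algebraic subsets. -/
def IrrAlg {N : ℕ} (S : Set (Fin N → ℂ)) : Prop :=
  IsAlg S ∧ S.Nonempty ∧ ∀ T₁ T₂ : Set (Fin N → ℂ), IsAlg T₁ → IsAlg T₂ →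
    S ⊆ T₁ ∪ T₂ → (S ⊆ T₁ ∨ S ⊆ T₂)

/-- Non-degenerate: the cone spans the ambient space. -/
def Nondeg {N : ℕ} (S : Set (Fin N → ℂ)) : Prop :=
  Submodule.span ℂ S = ⊤

/-- Projective dimension of (the projectivization of) a cone `S`,
defined as the Krull dimension of the poset of irreducible algebraic
subcones of `S` different from `{0}`. -/
noncomputable def pdim {N : ℕ} (S : Set (Fin N → ℂ)) : WithBot ℕ∞ :=
  Order.krullDim {T : Set (Fin N → ℂ) // IrrAlg T ∧ IsCone T ∧ T ≠ {0} ∧ T ⊆ S}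

/-- Cast a natural number into `WithBot ℕ∞`. -/
def nn (a : ℕ) : WithBot ℕ∞ := ((a : ℕ∞) : WithBot ℕ∞)

/-- Join of two cones. -/
def joinSet {N : ℕ} (S T : Set (Fin N → ℂ)) : Set (Fin N → ℂ) :=
  zcl {x | ∃ u ∈ S, ∃ v ∈ T, x = u + v}

/-- `secant k S` is (the cone over) the `k`-secant variety `S^k(X) = J(X^{k+1})`. -/
def secant {N : ℕ} : ℕ → Set (Fin N → ℂ) → Set (Fin N → ℂ)
  | 0, S => zcl S
  | (k+1), S => joinSet (secant k S) S

/-- Join of a finite family of cones. -/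
def joinFam {N m : ℕ} (F : Fin m → Set (Fin N → ℂ)) : Set (Fin N → ℂ) :=
  zcl {x | ∃ q : Fin m → Fin N → ℂ, (∀ i, q i ∈ F i) ∧ x = ∑ i, q i}

/-- Irreducible components. -/
def IsComponent {N : ℕ} (S T : Set (Fin N → ℂ)) : Prop :=
  IrrAlg T ∧ T ⊆ S ∧ ∀ T', IrrAlg T' → T' ⊆ S → T ⊆ T' → T = T'

/-- Union of the irreducible components of `S` through `x`. -/
def compThrough {N : ℕ} (S : Set (Fin N → ℂ)) (x : Fin N → ℂ) : Set (Fin N → ℂ) :=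
  ⋃₀ {T | IsComponent S T ∧ x ∈ T}

/-- Pure (equidimensional) sets. -/
def IsPure {N : ℕ} (S : Set (Fin N → ℂ)) : Prop :=
  ∀ T T', IsComponent S T → IsComponent S T' → pdim T = pdim T'

/-- Secant variety in the convention for possibly reducible varieties:
union of the joins of `k+1` distinct irreducible components (and the usual
secant variety in the irreducible case). -/
def SecantD {N : ℕ} (k : ℕ) (Y : Set (Fin N → ℂ)) : Set (Fin N → ℂ) :=
  (⋃₀ {J | ∃ T : Fin (k+1) → Set (Fin N → ℂ),
      (∀ i, IsComponent Y (T i)) ∧ Function.Injective T ∧ J = joinFam T})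
  ∪ {x | IrrAlg Y ∧ x ∈ secant k Y}

/-- The (cone over the) embedded tangent space at `x`: directions annihilated by the
differentials at `x` of all polynomials vanishing on `S`. -/
def embTangent {N : ℕ} (S : Set (Fin N → ℂ)) (x : Fin N → ℂ) : Set (Fin N → ℂ) :=
  {v | ∀ f : MvPolynomial (Fin N) ℂ, (∀ y ∈ S, eval y f = 0) →
      ∑ i, v i * eval x (pderiv i f) = 0}

def tanSpan {N : ℕ} (S : Set (Fin N → ℂ)) (x : Fin N → ℂ) : Submodule ℂ (Fin N → ℂ) :=
  Submodule.span ℂ (embTangent S x)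

/-- `x` is a smooth point of the `n`-dimensional projective variety with cone `S`. -/
def IsSmoothAt {N : ℕ} (S : Set (Fin N → ℂ)) (n : ℕ) (x : Fin N → ℂ) : Prop :=
  Module.finrank ℂ (tanSpan S x) = n + 1

/-- Algebraic subsets of tuple spaces. -/
def IsAlgT {N m : ℕ} (S : Set (Fin m → Fin N → ℂ)) : Prop :=
  ∃ I : Set (MvPolynomial (Fin m × Fin N) ℂ),
    S = {q | ∀ f ∈ I, eval (fun p => q p.1 p.2) f = 0}

/-- `P` holds for general (tuples of) points of `X`. -/
def Generically {N : ℕ} (m : ℕ) (X : Set (Fin N → ℂ))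
    (P : (Fin m → Fin N → ℂ) → Prop) : Prop :=
  ∃ B : Set (Fin m → Fin N → ℂ), IsAlgT B ∧ ¬ ({q | ∀ i, q i ∈ X} ⊆ B) ∧
    ∀ q : Fin m → Fin N → ℂ, (∀ i, q i ∈ X ∧ q i ≠ 0) → q ∉ B → P q

/-- `P` holds for general points of the set `S`. -/
def GenericallyOn {N : ℕ} (S : Set (Fin N → ℂ)) (P : (Fin N → ℂ) → Prop) : Prop :=
  ∃ B : Set (Fin N → ℂ), IsAlg B ∧ ¬ (S ⊆ B) ∧ ∀ x ∈ S, x ∉ B → x ≠ 0 → P x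

/-- `L` is `J_k`-tangent to `X` along `Y`: for every analytic arc of a point of `X`
and `s ≤ k` points of `Y`, linearly independent off `0`, with the `X`-point off `L`
for `t ≠ 0` and on `L` at `t = 0`, the flat limit of the spanned `s`-space
(described through analytic selections of vectors) lies in `L`. -/
def JkTangent {N : ℕ} (k : ℕ) (X Y : Set (Fin N → ℂ))
    (L : Submodule ℂ (Fin N → ℂ)) : Prop :=
  ∀ s : ℕ, 1 ≤ s → s ≤ k → ∀ q : Fin (s+1) → ℂ → (Fin N → ℂ), ∀ ε : ℝ, 0 < ε →
    (∀ i, AnalyticOnNhd ℂ (q i) (Metric.ball 0 ε)) →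
    (∀ t ∈ Metric.ball (0:ℂ) ε, q 0 t ∈ X) →
    (∀ i : Fin (s+1), i ≠ 0 → ∀ t ∈ Metric.ball (0:ℂ) ε, q i t ∈ Y) →
    (∀ t ∈ Metric.ball (0:ℂ) ε, t ≠ 0 → LinearIndependent ℂ (fun i => q i t)) →
    (∀ t ∈ Metric.ball (0:ℂ) ε, t ≠ 0 → q 0 t ∉ L) →
    q 0 0 ∈ L →
    ∀ w : ℂ → (Fin N → ℂ), AnalyticOnNhd ℂ w (Metric.ball 0 ε) →
      (∀ t ∈ Metric.ball (0:ℂ) ε, t ≠ 0 →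
        w t ∈ Submodule.span ℂ (Set.range (fun i => q i t))) →
      w 0 ∈ L

/-- `X` is `k`-smooth along `Y`: it is smooth along `Y` and any arc-limit
scheme of `m ≤ k+1` points of `X` supported on `Y` spans the right dimension,
i.e. pairwise non-proportional arcs of points stay linearly independent. -/
def KSmoothAlong {N : ℕ} (k n : ℕ) (X Y : Set (Fin N → ℂ)) : Prop :=
  (∀ y ∈ Y, y ≠ 0 → IsSmoothAt X n y) ∧
  ∀ m : ℕ, 2 ≤ m → m ≤ k + 1 → ∀ q : Fin m → ℂ → (Fin N → ℂ), ∀ ε : ℝ, 0 < ε →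
    (∀ i, AnalyticOnNhd ℂ (q i) (Metric.ball 0 ε)) →
    (∀ i, ∀ t ∈ Metric.ball (0:ℂ) ε, q i t ∈ X) →
    (∀ i, q i 0 ∈ Y ∧ q i 0 ≠ 0) →
    (∀ t ∈ Metric.ball (0:ℂ) ε, t ≠ 0 → ∀ i j : Fin m, i ≠ j →
        ∀ c : ℂ, q i t ≠ c • q j t) →
    ∀ t ∈ Metric.ball (0:ℂ) ε, t ≠ 0 → LinearIndependent ℂ (fun i => q i t)

def KSmooth {N : ℕ} (k n : ℕ) (X : Set (Fin N → ℂ)) : Prop := KSmoothAlong k n X X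

/-- The hyperplane with coefficient vector `c`. -/
def hypSub {N : ℕ} (c : Fin N → ℂ) : Submodule ℂ (Fin N → ℂ) :=
  LinearMap.ker (Finset.univ.sum fun i => c i • (LinearMap.proj i : (Fin N → ℂ) →ₗ[ℂ] ℂ))

/-- The hyperplane with coefficients `c` is tangent to `X` at the points `p j`. -/
def TangentHypAt {N m : ℕ} (X : Set (Fin N → ℂ)) (p : Fin m → Fin N → ℂ)
    (c : Fin N → ℂ) : Prop :=
  c ≠ 0 ∧ ∀ j, embTangent X (p j) ⊆ ↑(hypSub c)

/-- The tangential contact locus `Γ_{p_0,…,p_m}`: union of the irreducible components,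
through the points `p j`, of the closure of the locus of smooth points whose tangent
space lies in the span of the tangent spaces at the `p j` (`= T_{S^m(X),x}` by Terracini). -/
def GammaLocus {N m : ℕ} (X : Set (Fin N → ℂ)) (n : ℕ)
    (p : Fin m → Fin N → ℂ) : Set (Fin N → ℂ) :=
  ⋃₀ {T | IsComponent (zcl {q | q ∈ X ∧ q ≠ 0 ∧ IsSmoothAt X n q ∧
      embTangent X q ⊆ ↑(Submodule.span ℂ (⋃ j, embTangent X (p j)))}) T ∧ ∃ j, p j ∈ T}

/-- The projection contact locus `Ψ_{p_0,…,p_j}`: the component through `p 0` of the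
fibre through `p 0` of the tangential projection from `T_{X,p_1,…,p_j}`. -/
def PsiLocus {N j : ℕ} (X : Set (Fin N → ℂ))
    (p : Fin (j+1) → Fin N → ℂ) : Set (Fin N → ℂ) :=
  compThrough (X ∩ ↑(Submodule.span ℂ
    ((⋃ i : Fin j, embTangent X (p i.succ)) ∪ {p 0}))) (p 0)

/-- `X` is an `R_k`-variety: for `1 ≤ i ≤ k` and general points `p_0,…,p_i`, the
general hyperplane tangent to `X` at these points is `J_i`-tangent to `X` along the
tangential `i`-contact locus. -/
def RkVariety {N : ℕ} (k n : ℕ) (X : Set (Fin N → ℂ)) : Prop :=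
  ∀ i : ℕ, 1 ≤ i → i ≤ k →
    Generically (i+1) X fun p =>
      ∃ B : Set (Fin N → ℂ), IsAlg B ∧ ¬ ({c | TangentHypAt X p c} ⊆ B) ∧
        ∀ c, TangentHypAt X p c → c ∉ B → JkTangent i X (GammaLocus X n p) (hypSub c)

/-- The entry locus of `x` with respect to the `k`-secant variety of `X`. -/
def EntryLocus {N : ℕ} (k : ℕ) (X : Set (Fin N → ℂ)) (x : Fin N → ℂ) :
    Set (Fin N → ℂ) :=
  zcl {z | z ∈ X ∧ z ≠ 0 ∧ ∃ x' ∈ secant (k-1) X, x' ∉ Submodule.span ℂ {z} ∧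
      x ∈ Submodule.span ℂ ({z, x'} : Set (Fin N → ℂ))}

/-- `k`-Severi varieties: irreducible, non-degenerate `R_k`-varieties of dimension `n`
with `dim S^k(X) < r` and `dim S^k(X) = (k+2)n/2 + k`. -/
def KSeveri {N : ℕ} (k n : ℕ) (X : Set (Fin N → ℂ)) : Prop :=
  IrrAlg X ∧ IsCone X ∧ X ≠ {0} ∧ Nondeg X ∧ pdim X = nn n ∧
  RkVariety k n X ∧
  pdim (secant k X) < pdim (Set.univ : Set (Fin N → ℂ)) ∧
  pdim (secant k X) + pdim (secant k X) = nn ((k+2)*n + 2*k)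

/-! ### Helper lemmas -/

theorem aux_zcl_alg {N : ℕ} (S : Set (Fin N → ℂ)) : IsAlg (zcl S) := by
  refine ⟨{f | ∀ x ∈ S, eval x f = 0}, ?_⟩
  ext y
  constructor
  · intro hy f hf
    have := hy {x | ∀ g ∈ ({f} : Set _), eval x g = 0} ⟨⟨{f}, rfl⟩, by
      intro x hx g hg
      rw [Set.mem_singleton_iff.1 hg]
      exact hf x hx⟩
    exact this f rfl
  · rintro hy T ⟨⟨I, rfl⟩, hT⟩ f hf
    exact hy f fun x hx => hT hx f hf

theorem aux_sub_zcl {N : ℕ} (S : Set (Fin N → ℂ)) : S ⊆ zcl S :=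
  fun _ hx _ hT => hT.2 hx

theorem aux_zcl_min {N : ℕ} {S T : Set (Fin N → ℂ)} (hT : IsAlg T) (h : S ⊆ T) :
    zcl S ⊆ T :=
  fun _ hx => hx T ⟨hT, h⟩

theorem aux_alg_affine {N : ℕ} {T : Set (Fin N → ℂ)} (hT : IsAlg T) (c : ℂ)
    (v : Fin N → ℂ) : IsAlg {y | c • y + v ∈ T} := by
  obtain ⟨I, rfl⟩ := hT
  refine ⟨(bind₁ fun i => C c * X i + C (v i)) '' I, ?_⟩
  have key : ∀ (y : Fin N → ℂ) (f : MvPolynomial (Fin N) ℂ),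
      eval y (bind₁ (fun i => C c * X i + C (v i)) f) = eval (c • y + v) f := by
    intro y f
    have := eval₂Hom_bind₁ (RingHom.id ℂ) y (fun i => C c * X i + C (v i)) f
    change eval y _ = _ at this
    rw [this]
    congr 2
    ext i
    simp
  ext y
  simp [key]

theorem aux_alg_iInter {N : ℕ} {ι : Type} {T : ι → Set (Fin N → ℂ)}
    (hT : ∀ i, IsAlg (T i)) : IsAlg {y | ∀ i, y ∈ T i} := by
  choose I hI using hT
  refine ⟨⋃ i, I i, ?_⟩
  ext y
  simp only [Set.mem_setOf_eq, Set.mem_iUnion]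
  constructor
  · rintro h f ⟨i, hf⟩
    have := h i
    rw [hI i] at this
    exact this f hf
  · intro h i
    rw [hI i]
    exact fun f hf => h f ⟨i, hf⟩

theorem aux_line {N : ℕ} {T₁ T₂ : Set (Fin N → ℂ)} (h₁ : IsAlg T₁) (h₂ : IsAlg T₂)
    (z x : Fin N → ℂ) (h : ∀ c : ℂ, z + c • x ∈ T₁ ∪ T₂) :
    (∀ c : ℂ, z + c • x ∈ T₁) ∨ (∀ c : ℂ, z + c • x ∈ T₂) := by
  obtain ⟨I₁, rfl⟩ := h₁
  obtain ⟨I₂, rfl⟩ := h₂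
  by_contra! hcon
  obtain ⟨⟨a, ha⟩, ⟨b, hb⟩⟩ := hcon
  simp only [Set.mem_setOf_eq, not_forall] at ha hb
  obtain ⟨f, hf, ha⟩ := ha
  obtain ⟨g, hg, hb⟩ := hb
  let φ : MvPolynomial (Fin N) ℂ →ₐ[ℂ] Polynomial ℂ :=
    aeval fun i => Polynomial.C (z i) + Polynomial.X * Polynomial.C (x i)
  have key : ∀ (p : MvPolynomial (Fin N) ℂ) (c : ℂ),
      (φ p).eval c = eval (z + c • x) p := by
    intro p c
    induction p using MvPolynomial.induction_on with
    | C a => simp [φ]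
    | add p q hp hq => simp [hp, hq]
    | mul_X p i hp => simp only [map_mul, Polynomial.eval_mul, hp]; simp [φ]; exact Or.inl (mul_comm _ _)
  have hz : φ f * φ g = 0 := by
    apply Polynomial.funext
    intro c
    rw [Polynomial.eval_mul, key, key, Polynomial.eval_zero]
    rcases h c with h | h
    · rw [h f hf, zero_mul]
    · rw [h g hg, mul_zero]
  rcases mul_eq_zero.1 hz with h0 | h0
  · exact ha (by rw [← key, h0, Polynomial.eval_zero])
  · exact hb (by rw [← key, h0, Polynomial.eval_zero])

/-- The join of `Z` with the line through `x`. -/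
def auxW {N : ℕ} (Z : Set (Fin N → ℂ)) (x : Fin N → ℂ) : Set (Fin N → ℂ) :=
  zcl {y | ∃ z ∈ Z, ∃ c : ℂ, y = z + c • x}

theorem auxW_mem {N : ℕ} {Z : Set (Fin N → ℂ)} {x z : Fin N → ℂ} (hz : z ∈ Z) (c : ℂ) :
    z + c • x ∈ auxW Z x :=
  aux_sub_zcl _ ⟨z, hz, c, rfl⟩

theorem auxW_sub {N : ℕ} (Z : Set (Fin N → ℂ)) (x : Fin N → ℂ) : Z ⊆ auxW Z x :=
  fun z hz => by simpa using auxW_mem (x := x) hz 0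

theorem auxW_irr {N : ℕ} {Z : Set (Fin N → ℂ)} (hZ : IrrAlg Z) (x : Fin N → ℂ) :
    IrrAlg (auxW Z x) := by
  refine ⟨aux_zcl_alg _, hZ.2.1.mono (auxW_sub Z x), ?_⟩
  intro T₁ T₂ h₁ h₂ h
  have halg : ∀ T : Set (Fin N → ℂ), IsAlg T → IsAlg {z | ∀ c : ℂ, z + c • x ∈ T} := by
    intro T hT
    refine aux_alg_iInter (T := fun c : ℂ => {z | z + c • x ∈ T}) fun c => ?_
    simpa using aux_alg_affine hT 1 (c • x)
  have fin : ∀ T : Set (Fin N → ℂ), IsAlg T → Z ⊆ {z | ∀ c : ℂ, z + c • x ∈ T} →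
      auxW Z x ⊆ T := by
    intro T hT hs
    apply aux_zcl_min hT
    rintro _ ⟨z, hz, c, rfl⟩
    exact hs hz c
  refine (hZ.2.2 _ _ (halg _ h₁) (halg _ h₂) ?_).imp (fin _ h₁) (fin _ h₂)
  intro z hz
  exact aux_line h₁ h₂ z x fun c => h (auxW_mem hz c)

theorem auxW_cone {N : ℕ} {Z : Set (Fin N → ℂ)} (hZ : IsCone Z) (x : Fin N → ℂ) :
    IsCone (auxW Z x) := by
  refine ⟨auxW_sub Z x hZ.1, fun c => ?_⟩
  have := aux_alg_affine (aux_zcl_alg {y | ∃ z ∈ Z, ∃ c : ℂ, y = z + c • x}) c 0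
  intro y hy
  have h2 := aux_zcl_min this (S := {y | ∃ z ∈ Z, ∃ c : ℂ, y = z + c • x}) ?_ hy
  · simpa [auxW] using h2
  · rintro _ ⟨z, hz, d, rfl⟩
    have := auxW_mem (x := x) (hZ.2 c z hz) (c * d)
    simpa [smul_add, smul_smul, auxW] using this

theorem aux_zero {N : ℕ} : IrrAlg ({0} : Set (Fin N → ℂ)) := by
  refine ⟨⟨Set.range X, ?_⟩, Set.singleton_nonempty _, ?_⟩
  · ext y
    simp [funext_iff]
  · intro T₁ T₂ _ _ h
    simpa using h

theorem aux_pdim_ne_top {N : ℕ} (S : Set (Fin N → ℂ)) : pdim S ≤ (N : WithBot ℕ∞) := by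
  have hdim : ringKrullDim (MvPolynomial (Fin N) ℂ) = N := by
    simp [MvPolynomial.ringKrullDim_of_isNoetherianRing]
  rw [← hdim, ringKrullDim, ← Order.krullDim_orderDual]
  let J : Set (Fin N → ℂ) → Ideal (MvPolynomial (Fin N) ℂ) := fun T =>
    { carrier := {f | ∀ x ∈ T, eval x f = 0}
      add_mem' := fun {a b} ha hb x hx => by simp [ha x hx, hb x hx]
      zero_mem' := fun x _ => by simp
      smul_mem' := fun c f hf x hx => by simp [hf x hx] }
  have hJ : ∀ T, IrrAlg T → (J T).IsPrime := by
    intro T hT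
    refine ⟨?_, ?_⟩
    · intro h
      obtain ⟨x, hx⟩ := hT.2.1
      have : (1 : MvPolynomial (Fin N) ℂ) ∈ J T := by rw [h]; trivial
      simpa using this x hx
    · intro f g hfg
      have := hT.2.2 {x | ∀ p ∈ ({f} : Set _), eval x p = 0}
        {x | ∀ p ∈ ({g} : Set _), eval x p = 0} ⟨_, rfl⟩ ⟨_, rfl⟩ (by
          intro x hx
          have := hfg x hx
          simpa using this)
      exact this.imp (fun h x hx => h hx f rfl) (fun h x hx => h hx g rfl)
  have hle : ∀ T T', IsAlg T' → J T' ≤ J T → T ⊆ T' := by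
    rintro T _ ⟨I, rfl⟩ h x hx f hf
    exact h (x := f) (fun y hy => hy f hf) x hx
  refine Order.krullDim_le_of_strictMono
    (fun T => OrderDual.toDual (⟨J T.1, hJ T.1 T.2.1⟩ : PrimeSpectrum _)) ?_
  intro T T' hlt
  have h1 : T.1 ⊆ T'.1 := hlt.le
  rw [OrderDual.toDual_lt_toDual, ← PrimeSpectrum.asIdeal_lt_asIdeal]
  refine lt_of_le_not_ge (fun f hf x hx => hf x (h1 hx)) fun h => ?_
  exact hlt.not_ge (hle _ _ T.2.1.1 h)

theorem aux_main {N : ℕ} (S X : Set (Fin N → ℂ)) (hS : IsAlg S) (hXS : X ⊆ S)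
    (hc : IsCone X) (hne : X ≠ {0}) (hnd : Nondeg X)
    (h : pdim S = pdim (joinSet S X)) : S = Set.univ := by
  obtain ⟨x₀, hx₀, hx₀'⟩ : ∃ x ∈ X, x ≠ 0 := by
    by_contra! hcon
    exact hne (Set.eq_singleton_iff_unique_mem.2 ⟨hc.1, hcon⟩)
  have hcone0 : IsCone ({0} : Set (Fin N → ℂ)) := by
    refine ⟨rfl, ?_⟩
    rintro c x rfl
    simp
  haveI : Nonempty {T : Set (Fin N → ℂ) // IrrAlg T ∧ IsCone T ∧ T ≠ {0} ∧ T ⊆ S} := by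
    refine ⟨⟨auxW {0} x₀, auxW_irr aux_zero _, auxW_cone hcone0 _, ?_, ?_⟩⟩
    · intro h0
      have := auxW_mem (x := x₀) (Set.mem_singleton (0 : Fin N → ℂ)) 1
      rw [h0] at this
      exact hx₀' (by simpa using this)
    · apply aux_zcl_min hS
      rintro _ ⟨z, rfl, c, rfl⟩
      simpa using hXS (hc.2 c x₀ hx₀)
  have hfin := aux_pdim_ne_top S
  have h0 : (0 : WithBot ℕ∞) ≤ pdim S := Order.krullDim_nonneg
  obtain ⟨d, hd⟩ : ∃ d : ℕ, pdim S = (d : WithBot ℕ∞) := by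
    generalize pdim S = e at hfin h0
    induction e with
    | bot => simp at h0
    | coe e =>
      induction e with
      | top => exact absurd hfin (by
          intro hh
          have : (⊤ : ℕ∞) ≤ (N : ℕ∞) := by exact_mod_cast hh
          simp at this)
      | coe e => exact ⟨e, rfl⟩
  obtain ⟨p, hp⟩ := (Order.le_krullDim_iff (n := d)).1 (le_of_eq hd.symm)
  have hZ := p.last.2
  have hSJ : ∀ z ∈ S, ∀ x ∈ X, z + x ∈ joinSet S X := fun z hz x hx =>
    aux_sub_zcl _ ⟨z, hz, x, hx, rfl⟩
  have hSJ' : S ⊆ joinSet S X := fun z hz => by simpa using hSJ z hz 0 hc.1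
  have hW : ∀ x ∈ X, auxW p.last.1 x ⊆ p.last.1 := by
    intro x hx
    by_contra hcon
    have hWS : auxW p.last.1 x ⊆ joinSet S X := by
      apply aux_zcl_min (aux_zcl_alg _)
      rintro _ ⟨z, hz, c, rfl⟩
      exact hSJ z (hZ.2.2.2 hz) _ (hc.2 c x hx)
    have hWne : auxW p.last.1 x ≠ {0} := by
      intro h1
      apply hZ.2.2.1
      apply Set.eq_singleton_iff_unique_mem.2 ⟨hZ.2.1.1, fun y hy => ?_⟩
      have := auxW_sub _ x hy
      rw [h1] at this
      exact this
    let ι : {T : Set (Fin N → ℂ) // IrrAlg T ∧ IsCone T ∧ T ≠ {0} ∧ T ⊆ S} →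
        {T : Set (Fin N → ℂ) // IrrAlg T ∧ IsCone T ∧ T ≠ {0} ∧ T ⊆ joinSet S X} :=
      fun T => ⟨T.1, T.2.1, T.2.2.1, T.2.2.2.1, T.2.2.2.2.trans hSJ'⟩
    have hι : StrictMono ι := fun a b hab => hab
    let q : LTSeries {T : Set (Fin N → ℂ) //
        IrrAlg T ∧ IsCone T ∧ T ≠ {0} ∧ T ⊆ joinSet S X} :=
      (p.map ι hι).snoc ⟨auxW p.last.1 x, auxW_irr hZ.1 x, auxW_cone hZ.2.1 x, hWne, hWS⟩ (by
        rw [LTSeries.last_map]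
        exact lt_of_le_not_ge (auxW_sub p.last.1 x) hcon)
    have hq : q.length = d + 1 := by simp [q, hp]
    have hle : (q.length : WithBot ℕ∞) ≤ pdim (joinSet S X) := Order.LTSeries.length_le_krullDim q
    rw [← h, hd, hq] at hle
    have : d + 1 ≤ d := by exact_mod_cast hle
    omega
  have hadd : ∀ v ∈ Submodule.span ℂ X, ∀ z ∈ p.last.1, z + v ∈ p.last.1 := by
    intro v hv
    induction hv using Submodule.span_induction with
    | mem x hx => exact fun z hz => hW x hx (by simpa using auxW_mem (x := x) hz 1)
    | zero => simp
    | add u v _ _ hu hv => exact fun z hz => by rw [← add_assoc]; exact hv _ (hu z hz)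
    | smul c v _ hv =>
      intro z hz
      by_cases hc0 : c = 0
      · simpa [hc0] using hz
      · have := hZ.2.1.2 c _ (hv _ (hZ.2.1.2 c⁻¹ z hz))
        simpa [smul_add, smul_smul, hc0] using this
  apply Set.eq_univ_of_forall
  intro v
  apply hZ.2.2.2
  have hv : v ∈ Submodule.span ℂ X := by rw [hnd]; trivial
  simpa using hadd v hv 0 hZ.2.1.1

theorem aux_secant_alg {N : ℕ} (k : ℕ) (S : Set (Fin N → ℂ)) : IsAlg (secant k S) := by
  cases k <;> exact aux_zcl_alg _

theorem aux_secant_sub {N : ℕ} (k : ℕ) (S : Set (Fin N → ℂ)) (h : (0 : Fin N → ℂ) ∈ S) :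
    S ⊆ secant k S := by
  induction k with
  | zero => exact aux_sub_zcl S
  | succ k ih => exact fun x hx => aux_sub_zcl _ ⟨x, ih hx, 0, h, by simp⟩

/-- if `dim J(X^k) = dim J(X^{k+1})` then `J(X^k) = ℙ^r`
(recall `J(X^k) = S^{k-1}(X)`); similarly if `dim S^k(X) = dim S^{k-1}(X)`
then `S^k(X) = ℙ^r`. -/
theorem secant_dim_stabilizes_fills (r k : ℕ) (hk : 1 ≤ k)
    (X : Set (Fin (r+1) → ℂ))
    (hX : IsAlg X) (hc : IsCone X) (hne : X ≠ {0}) (hnd : Nondeg X) :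
    (pdim (secant (k-1) X) = pdim (secant k X) → secant (k-1) X = Set.univ) ∧
    (pdim (secant k X) = pdim (secant (k-1) X) → secant k X = Set.univ) := by
  obtain ⟨m, rfl⟩ : ∃ m, k = m + 1 := ⟨k - 1, by omega⟩
  have main : pdim (secant m X) = pdim (secant (m + 1) X) → secant m X = Set.univ :=
    aux_main _ X (aux_secant_alg m X) (aux_secant_sub m X hc.1) hc hne hnd
  refine ⟨main, fun h => ?_⟩
  have hm := main h.symm
  apply Set.eq_univ_of_forall
  intro v
  exact aux_sub_zcl _ ⟨v, by rw [hm]; trivial, 0, hc.1, by simp⟩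
end
end

section
/- Terracini's Lemma: if X ⊂ P^r is an irreducible projective variety, p_0,…,p_k ∈ X are general points, and x ∈ ⟨p_0,…,p_k⟩ is a general point of the span, then the embedded tangent space to S^k(X) at x equals the span of the tangent spaces T_{X,p_0},…,T_{X,p_k}. -/
open MvPolynomial Classical

noncomputable section

/-- In characteristic zero, a finitely generated field over `ℂ` is formally smooth over every
`ℂ`-subalgebra. -/
theorem tl_formallySmooth (R L : Type) [CommRing R] [IsDomain R] [Field L] [Algebra ℂ R]
    [Algebra ℂ L] [Algebra R L] [IsScalarTower ℂ R L] [FaithfulSMul R L]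
    [Algebra.EssFiniteType ℂ L] : Algebra.FormallySmooth R L := by
  let := FractionRing.liftAlgebra R L
  have := FractionRing.isScalarTower_liftAlgebra R L
  have : IsScalarTower ℂ (FractionRing R) L := by
    refine IsScalarTower.of_algebraMap_eq fun x => ?_
    rw [IsScalarTower.algebraMap_apply ℂ R (FractionRing R),
      ← IsScalarTower.algebraMap_apply R (FractionRing R) L,
      ← IsScalarTower.algebraMap_apply ℂ R L]
  have : Algebra.EssFiniteType (FractionRing R) L :=
    Algebra.EssFiniteType.of_comp ℂ (FractionRing R) L
  have : CharZero (FractionRing R) := 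
    charZero_of_injective_algebraMap (algebraMap ℂ (FractionRing R)).injective
  have : Algebra.FormallySmooth (FractionRing R) L := Algebra.FormallySmooth.of_perfectField
  have : Algebra.FormallySmooth R (FractionRing R) :=
    Algebra.FormallySmooth.of_isLocalization (nonZeroDivisors R)
  exact Algebra.FormallySmooth.comp R (FractionRing R) L

/-- Lifting ring homs along square-zero surjections. -/
theorem tl_lift (R L B : Type) [CommRing R] [IsDomain R] [Field L] [Algebra ℂ R]
    [Algebra ℂ L] [Algebra.EssFiniteType ℂ L] [CommRing B]
    (t : R →ₐ[ℂ] L) (ht : Function.Injective t)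
    (ψ : R →+* B) (π : B →+* L) (hπ : Function.Surjective π)
    (hker : ∀ a b, π a = 0 → π b = 0 → a * b = 0) (hc : ∀ a, π (ψ a) = t a) :
    ∃ s : L →+* B, (∀ a, π (s a) = a) ∧ ∀ a, s (t a) = ψ a := by
  let : Algebra R L := t.toRingHom.toAlgebra
  let : Algebra R B := ψ.toAlgebra
  have : IsScalarTower ℂ R L := IsScalarTower.of_algebraMap_eq fun x => (t.commutes x).symm
  have : FaithfulSMul R L := (faithfulSMul_iff_algebraMap_injective R L).2 ht
  have := tl_formallySmooth R L
  let π' : B →ₐ[R] L := { π with commutes' := hc }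
  have hn : IsNilpotent (RingHom.ker (π' : B →+* L)) := by
    refine ⟨2, ?_⟩
    rw [pow_two, Ideal.zero_eq_bot, eq_bot_iff, Ideal.mul_le]
    intro a ha b hb
    exact hker a b ha hb
  let s := Algebra.FormallySmooth.liftOfSurjective (AlgHom.id R L) π' hπ hn
  refine ⟨s, fun a => Algebra.FormallySmooth.liftOfSurjective_apply (AlgHom.id R L) π' hπ hn a,
    fun a => s.commutes a⟩

theorem tl_dual {σ L : Type} [Fintype σ] [Field L] (h : ℂ →+* L)
    (a v : σ → L) (F : MvPolynomial σ ℂ) :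
    eval₂Hom ((TrivSqZeroExt.inlHom L L).comp h)
      (fun i => TrivSqZeroExt.inl (a i) + TrivSqZeroExt.inr (v i)) F =
    (TrivSqZeroExt.inl (eval₂Hom h a F) +
      TrivSqZeroExt.inr (∑ i, v i * eval₂Hom h a (pderiv i F)) : TrivSqZeroExt L L) := by
  induction F using MvPolynomial.induction_on with
  | C c => ext <;> simp
  | add p q hp hq =>
    rw [map_add, hp, hq]
    ext <;> simp [mul_add, Finset.sum_add_distrib]
  | mul_X p i hp =>
    rw [map_mul, hp]
    ext
    · simp
    · simp [pderiv_X, Pi.single_apply, mul_add, Finset.sum_add_distrib, Finset.mul_sum]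
      rw [add_comm]
      congr 1
      · rw [Finset.sum_eq_single i] <;> simp +contextual [eq_comm, mul_comm]
      · rw [Finset.sum_mul]
        exact Finset.sum_congr rfl fun j _ => by ring

/-- Extension of derivations in coordinates. -/
theorem tl_ext {σ τ : Type} [Fintype σ] [Fintype τ] (P : Ideal (MvPolynomial τ ℂ)) [P.IsPrime]
    (g : σ → MvPolynomial τ ℂ) (L : Type) [Field L] [Algebra ℂ L] [Algebra.EssFiniteType ℂ L]
    (ev : MvPolynomial τ ℂ →ₐ[ℂ] L) (hev : ∀ F, ev F = 0 ↔ F ∈ P) (w : σ → L)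
    (hw : ∀ f : MvPolynomial σ ℂ, aeval g f ∈ P → ∑ i, w i * ev (aeval g (pderiv i f)) = 0) :
    ∃ v : τ → L, (∀ F ∈ P, ∑ j, v j * ev (pderiv j F) = 0) ∧
      ∀ i, ∑ j, v j * ev (pderiv j (g i)) = w i := by
  let a : σ → L := fun i => ev (g i)
  let b : τ → L := fun j => ev (X j)
  let h : ℂ →+* L := algebraMap ℂ L
  have hb : ∀ F, eval₂Hom h b F = ev F := by
    intro F
    have : (aeval b : MvPolynomial τ ℂ →ₐ[ℂ] L) = ev := by ext j; simp [b]
    rw [← this]; rfl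
  have ha : ∀ f, eval₂Hom h a f = ev (aeval g f) := by
    intro f
    have : (aeval a : MvPolynomial σ ℂ →ₐ[ℂ] L) = ev.comp (aeval g) := by ext j; simp [a]
    rw [← AlgHom.comp_apply, ← this]; rfl
  let θ : MvPolynomial σ ℂ →ₐ[ℂ] L := ev.comp (aeval g)
  let R := MvPolynomial σ ℂ ⧸ RingHom.ker θ
  let t : R →ₐ[ℂ] L := Ideal.kerLiftAlg θ
  have ht : Function.Injective t := Ideal.kerLiftAlg_injective θ
  have : (RingHom.ker θ).IsPrime := RingHom.ker_isPrime θ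
  let φ := eval₂Hom ((TrivSqZeroExt.inlHom L L).comp h)
      (fun i => (TrivSqZeroExt.inl (a i) + TrivSqZeroExt.inr (w i) : TrivSqZeroExt L L))
  have hφ : ∀ f ∈ RingHom.ker θ, φ f = 0 := by
    intro f hf
    have hf' : ev (aeval g f) = 0 := hf
    simp only [φ]
    rw [tl_dual, ha, hf']
    simp only [ha]
    rw [hw f ((hev _).1 hf')]
    simp
  let ψ : R →+* TrivSqZeroExt L L := Ideal.Quotient.lift _ φ hφ
  let π : TrivSqZeroExt L L →+* L := (TrivSqZeroExt.fstHom L L L).toRingHom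
  obtain ⟨s, hs1, hs2⟩ := tl_lift R L (TrivSqZeroExt L L) t ht ψ π
    (fun x => ⟨TrivSqZeroExt.inl x, rfl⟩)
    (by
      intro x y hx hy
      have hx' : x.fst = 0 := hx
      have hy' : y.fst = 0 := hy
      ext <;> simp [hx', hy'])
    (by
      intro x
      obtain ⟨f, rfl⟩ := Ideal.Quotient.mk_surjective x
      change (φ f).fst = ev (aeval g f)
      simp only [φ]
      rw [tl_dual, ha]
      simp)
  let v : τ → L := fun j => (s (b j)).snd
  have hsev : ∀ F, s (ev F) = TrivSqZeroExt.inl (ev F) +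
      TrivSqZeroExt.inr (∑ j, v j * ev (pderiv j F)) := by
    intro F
    have key : s.comp ev.toRingHom = eval₂Hom ((TrivSqZeroExt.inlHom L L).comp h)
      (fun j => (TrivSqZeroExt.inl (b j) + TrivSqZeroExt.inr (v j) : TrivSqZeroExt L L)) := by
      refine MvPolynomial.ringHom_ext ?_ ?_
      · intro c
        have h1 : s (t (algebraMap ℂ R c)) = ψ (algebraMap ℂ R c) := hs2 _
        have h2 : ψ (algebraMap ℂ R c) = φ (C c) := rfl
        rw [t.commutes, h2] at h1
        have h3 : ev (C c) = algebraMap ℂ L c := ev.commutes c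
        simp only [RingHom.comp_apply, AlgHom.toRingHom_eq_coe, RingHom.coe_coe, h3, h1]
        simp [φ]
      · intro j
        have := hs1 (b j)
        ext
        · simpa using (show (s (b j)).fst = b j from this)
        · simp [v, b]
    have := congrArg (fun q => q F) key
    simp only [RingHom.comp_apply, AlgHom.toRingHom_eq_coe, RingHom.coe_coe] at this
    rw [this, tl_dual]
    simp only [hb]
  refine ⟨v, ?_, ?_⟩
  · intro F hF
    have := hsev F
    rw [(hev F).2 hF, map_zero] at this
    have := congrArg TrivSqZeroExt.snd this
    simpa using this.symm
  · intro i
    have h1 : s (t (Ideal.Quotient.mk _ (X i))) = ψ (Ideal.Quotient.mk _ (X i)) := hs2 _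
    have h2 : ψ (Ideal.Quotient.mk _ (X i)) = φ (X i) := rfl
    have h3 : t (Ideal.Quotient.mk _ (X i)) = ev (aeval g (X i)) := rfl
    rw [h2, h3, aeval_X, hsev] at h1
    have := congrArg TrivSqZeroExt.snd h1
    simpa [φ] using this

theorem tl_eval_aeval {σ τ : Type} (g : σ → MvPolynomial τ ℂ) (y : τ → ℂ) (p : MvPolynomial σ ℂ) :
    eval (fun i => eval y (g i)) p = eval y (aeval g p) := by
  induction p using MvPolynomial.induction_on with
  | C c => simp
  | add p q hp hq => simp [hp, hq]
  | mul_X p i hp => simp [hp]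

set_option maxHeartbeats 1600000 in
/-- Generic smoothness in coordinates. -/
theorem tl_gensmooth {σ τ : Type} [Fintype σ] [Fintype τ] (P : Ideal (MvPolynomial τ ℂ))
    [P.IsPrime] (g : σ → MvPolynomial τ ℂ) :
    ∃ d ∉ P, ∀ y : τ → ℂ, (∀ F ∈ P, eval y F = 0) → eval y d ≠ 0 → ∀ w : σ → ℂ,
      (∀ f : MvPolynomial σ ℂ, aeval g f ∈ P →
        ∑ i, w i * eval (fun i => eval y (g i)) (pderiv i f) = 0) →
      ∃ v : τ → ℂ, (∀ F ∈ P, ∑ j, v j * eval y (pderiv j F) = 0) ∧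
        ∀ i, ∑ j, v j * eval y (pderiv j (g i)) = w i := by
  let S := MvPolynomial τ ℂ ⧸ P
  let L := FractionRing S
  have : Algebra.EssFiniteType S L := Algebra.EssFiniteType.of_isLocalization L (nonZeroDivisors S)
  have : Algebra.EssFiniteType ℂ L := Algebra.EssFiniteType.comp ℂ S L
  let ev : MvPolynomial τ ℂ →ₐ[ℂ] L := (IsScalarTower.toAlgHom ℂ S L).comp (Ideal.Quotient.mkₐ ℂ P)
  have hevdef : ∀ F, ev F = algebraMap S L (Ideal.Quotient.mk P F) := fun F => rfl
  have hev : ∀ F, ev F = 0 ↔ F ∈ P := by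
    intro F
    rw [hevdef, IsFractionRing.to_map_eq_zero_iff, Ideal.Quotient.eq_zero_iff_mem]
  let Q := {f : MvPolynomial σ ℂ // aeval g f ∈ P}
  let D : Q → Module.Dual L (σ → L) := fun f =>
    ∑ i, ev (aeval g (pderiv i f.1)) • (LinearMap.proj i : (σ → L) →ₗ[L] L)
  have hD : ∀ f w, D f w = ∑ i, w i * ev (aeval g (pderiv i f.1)) := by
    intro f w
    simp [D, mul_comm]
  let W : Submodule L (Module.Dual L (σ → L)) := Submodule.span L (Set.range D)
  let K0 : Submodule L (σ → L) := W.dualCoannihilator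
  have hK0 : ∀ w ∈ K0, ∀ f, D f w = 0 := fun w hw f =>
    (Submodule.mem_dualCoannihilator _).1 hw _ (Submodule.subset_span ⟨f, rfl⟩)
  obtain ⟨pr, hpr⟩ := LinearMap.exists_leftInverse_of_injective K0.subtype
    (by simp)
  have hpr' : ∀ x : K0, pr x = x := fun x => LinearMap.congr_fun hpr x
  have hrow : ∀ i, ∃ c : Q →₀ L, ∀ w : σ → L,
      w i = (pr w : σ → L) i + c.sum fun f a => a * D f w := by
    intro i
    let ρ : Module.Dual L (σ → L) :=
      LinearMap.proj i - (LinearMap.proj i).comp (K0.subtype.comp pr)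
    have hρ : ρ ∈ W := by
      rw [← Subspace.dualCoannihilator_dualAnnihilator_eq (W := W), Submodule.mem_dualAnnihilator]
      intro w hw
      simp [ρ, hpr' ⟨w, hw⟩]
    obtain ⟨c, hc⟩ := (Finsupp.mem_span_range_iff_exists_finsupp).1 hρ
    refine ⟨c, fun w => ?_⟩
    have := LinearMap.congr_fun hc w
    simp only [Finsupp.sum, LinearMap.sum_apply, LinearMap.smul_apply, smul_eq_mul] at this ⊢
    rw [this]
    simp [ρ]
  choose c hc using hrow
  have hV : ∀ i', ∃ v : τ → L, (∀ F ∈ P, ∑ j, v j * ev (pderiv j F) = 0) ∧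
      ∀ i, ∑ j, v j * ev (pderiv j (g i)) = (pr (Pi.single i' 1) : σ → L) i := by
    intro i'
    refine tl_ext P g L ev hev _ fun f hf => ?_
    rw [← hD ⟨f, hf⟩]
    exact hK0 _ (pr _).2 _
  choose V hV1 hV2 using hV
  obtain ⟨⟨b, hb0⟩, hb⟩ := IsLocalization.exist_integer_multiples_of_finset (nonZeroDivisors S)
    ((Finset.univ.image fun p : σ × τ => V p.1 p.2) ∪
      Finset.univ.biUnion fun i => (c i).support.image (c i))
  obtain ⟨d, rfl⟩ := Ideal.Quotient.mk_surjective b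
  have hint : ∀ a : L, (∃ s : S, algebraMap S L s = (Ideal.Quotient.mk P d) • a) →
      ∃ F, ev F = ev d * a := by
    rintro a ⟨s, hs⟩
    obtain ⟨F, rfl⟩ := Ideal.Quotient.mk_surjective s
    exact ⟨F, by rw [hevdef, hs]; exact Algebra.smul_def (R := S) (A := L) _ _⟩
  have hVi : ∀ i j, ∃ F, ev F = ev d * V i j := by
    intro i j
    exact hint _ (hb _ (Finset.mem_union_left _ (Finset.mem_image.2 ⟨(i, j), by simp, rfl⟩)))
  have hci : ∀ i f, ∃ F, ev F = ev d * c i f := by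
    intro i f
    by_cases hf : c i f = 0
    · exact ⟨0, by simp [hf]⟩
    · exact hint _ (hb _ (Finset.mem_union_right _ (Finset.mem_biUnion.2
        ⟨i, by simp, Finset.mem_image.2 ⟨f, by simpa using hf, rfl⟩⟩)))
  choose V' hV' using hVi
  choose c' hc' using hci
  have e1 : ∀ i i', (if i = i' then d else 0) - (∑ j, V' i' j * pderiv j (g i) +
      ∑ f ∈ (c i).support, c' i f * aeval g (pderiv i' f.1)) ∈ P := by
    intro i i'
    rw [← hev]
    have h1 := hc i (Pi.single i' 1)
    rw [← hV2] at h1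
    have h2 : ∀ f, D f (Pi.single i' 1) = ev (aeval g (pderiv i' f.1)) := by
      intro f
      rw [hD, Finset.sum_eq_single i'] <;> simp +contextual
    simp only [h2, Finsupp.sum] at h1
    simp only [map_sub, map_add, map_sum, map_mul, hV', hc', mul_assoc, ← Finset.mul_sum]
    rw [← mul_add, ← h1]
    by_cases h : i = i' <;> simp [h, Pi.single_apply]
  have e2 : ∀ i', ∀ F ∈ P, ∑ j, V' i' j * pderiv j F ∈ P := by
    intro i' F hF
    rw [← hev]
    simp only [map_sum, map_mul, hV', mul_assoc, ← Finset.mul_sum, hV1 i' F hF, mul_zero]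
  refine ⟨d, ?_, ?_⟩
  · intro hd
    exact nonZeroDivisors.ne_zero hb0 (Ideal.Quotient.eq_zero_iff_mem.2 hd)
  intro y hy hd w hw
  refine ⟨fun j => (eval y d)⁻¹ * ∑ i', eval y (V' i' j) * w i', ?_, ?_⟩
  · intro F hF
    have : ∀ i', ∑ j, eval y (V' i' j) * eval y (pderiv j F) = 0 := by
      intro i'
      simpa using hy _ (e2 i' F hF)
    calc _ = (eval y d)⁻¹ * ∑ i', w i' * ∑ j, eval y (V' i' j) * eval y (pderiv j F) := by
          simp only [Finset.mul_sum, Finset.sum_mul]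
          rw [Finset.sum_comm]
          exact Finset.sum_congr rfl fun _ _ => Finset.sum_congr rfl fun _ _ => by ring
      _ = 0 := by simp [this]
  · intro i
    have h1 : ∀ i', (if i = i' then eval y d else 0) = ∑ j, eval y (V' i' j) * eval y (pderiv j (g i)) +
      ∑ f ∈ (c i).support, eval y (c' i f) * eval y (aeval g (pderiv i' f.1)) := by
      intro i'
      have := hy _ (e1 i i')
      rw [map_sub, sub_eq_zero, apply_ite (eval y)] at this
      simpa only [map_zero, map_add, map_sum, map_mul] using this
    have h2 : eval y d * w i = ∑ i', (if i = i' then eval y d else 0) * w i' := by simp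
    have h3 : ∀ f : Q, ∑ i', w i' * eval y (aeval g (pderiv i' f.1)) = 0 := by
      intro f
      simpa only [tl_eval_aeval] using hw f.1 f.2
    have h4 : ∑ i', (∑ f ∈ (c i).support, eval y (c' i f) * eval y (aeval g (pderiv i' f.1))) * w i'
        = 0 := by
      calc _ = ∑ f ∈ (c i).support, eval y (c' i f) *
            ∑ i', w i' * eval y (aeval g (pderiv i' f.1)) := by
            simp only [Finset.mul_sum, Finset.sum_mul]
            rw [Finset.sum_comm]
            exact Finset.sum_congr rfl fun _ _ => Finset.sum_congr rfl fun _ _ => by ring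
        _ = 0 := by simp only [h3, mul_zero, Finset.sum_const_zero]
    simp only [h1, add_mul, Finset.sum_add_distrib, h4, add_zero] at h2
    rw [← mul_right_inj' hd, h2]
    simp only [Finset.mul_sum, Finset.sum_mul]
    rw [Finset.sum_comm]
    refine Finset.sum_congr rfl fun _ _ => Finset.sum_congr rfl fun _ _ => ?_
    field_simp

theorem tl_chain {σ τ : Type} [Fintype σ] (g : σ → MvPolynomial τ ℂ) (t : τ) (y : τ → ℂ)
    (f : MvPolynomial σ ℂ) :
    eval y (pderiv t (aeval g f)) =
      ∑ i, eval (fun i => eval y (g i)) (pderiv i f) * eval y (pderiv t (g i)) := by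
  induction f using MvPolynomial.induction_on with
  | C c => simp
  | add p q hp hq => simp only [map_add, hp, hq, add_mul, Finset.sum_add_distrib]
  | mul_X p i hp =>
    simp only [map_mul, aeval_X, Derivation.leibniz, smul_eq_mul, map_add, hp, pderiv_X,
      eval_X, add_mul, Finset.sum_add_distrib, ← tl_eval_aeval, Finset.mul_sum]
    congr 1
    · rw [Finset.sum_eq_single i]
      · simp
      · intro b _ hb; simp [Pi.single_apply, hb.symm]
      · simp
    · exact Finset.sum_congr rfl fun _ _ => by ring

theorem tl_aff {N : ℕ} (a : ℂ) (b : Fin N → ℂ) (f : MvPolynomial (Fin N) ℂ) :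
    ∃ f' : MvPolynomial (Fin N) ℂ, (∀ y, eval y f' = eval (a • y + b) f) ∧
      ∀ y j, eval y (pderiv j f') = a * eval (a • y + b) (pderiv j f) := by
  let g : Fin N → MvPolynomial (Fin N) ℂ := fun i => C a * X i + C (b i)
  have hg : ∀ y, (fun i => eval y (g i)) = a • y + b := by
    intro y; ext i; simp [g]
  refine ⟨aeval g f, fun y => ?_, fun y j => ?_⟩
  · rw [← tl_eval_aeval, hg]
  · rw [tl_chain, hg, Finset.sum_eq_single j]
    · simp [g, mul_comm]
    · intro i _ hi
      simp [g, pderiv_X, Pi.single_apply, hi.symm]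
    · simp

theorem tl_zcl {N : ℕ} (S : Set (Fin N → ℂ)) (f : MvPolynomial (Fin N) ℂ) :
    (∀ y ∈ zcl S, eval y f = 0) ↔ ∀ y ∈ S, eval y f = 0 := by
  constructor
  · intro h y hy
    exact h y (Set.mem_sInter.2 fun T hT => hT.2 hy)
  · intro h y hy
    have := Set.mem_sInter.1 hy {x | ∀ q ∈ ({f} : Set (MvPolynomial (Fin N) ℂ)), eval x q = 0}
      ⟨⟨_, rfl⟩, fun x hx q hq => by rw [Set.mem_singleton_iff.1 hq]; exact h x hx⟩
    exact this f rfl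

theorem tl_secant {N : ℕ} (S : Set (Fin N → ℂ)) (k : ℕ) (f : MvPolynomial (Fin N) ℂ) :
    (∀ y ∈ secant k S, eval y f = 0) ↔
      ∀ q : Fin (k+1) → Fin N → ℂ, (∀ i, q i ∈ S) → eval (∑ i, q i) f = 0 := by
  induction k generalizing f with
  | zero =>
    rw [secant, tl_zcl]
    constructor
    · intro h q hq
      simpa using h _ (hq 0)
    · intro h y hy
      simpa using h (fun _ => y) (fun _ => hy)
  | succ k ih =>
    rw [secant, joinSet, tl_zcl]
    constructor
    · intro h q hq
      obtain ⟨f', hf', -⟩ := tl_aff 1 (q (Fin.last (k+1))) f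
      have := (ih f').1 (fun y hy => by
        rw [hf', one_smul]
        exact h _ ⟨y, hy, _, hq _, rfl⟩) (fun i => q i.castSucc) (fun i => hq _)
      rw [hf', one_smul] at this
      rw [Fin.sum_univ_castSucc]
      exact this
    · rintro h x ⟨u, hu, v, hv, rfl⟩
      obtain ⟨f', hf', -⟩ := tl_aff 1 v f
      have := (ih f').2 (fun q hq => by
        rw [hf', one_smul]
        have := h (Fin.snoc (α := fun _ => Fin N → ℂ) q v) (fun i => by
          refine Fin.lastCases ?_ (fun i => ?_) i
          · simpa using hv
          · simpa using hq i)
        rw [Fin.sum_univ_castSucc] at this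
        simpa using this) u hu
      rwa [hf', one_smul] at this

theorem tl_irr {N : ℕ} (S : Set (Fin N → ℂ)) (hS : IrrAlg S) (f₁ f₂ : MvPolynomial (Fin N) ℂ)
    (h₁ : ∃ x ∈ S, eval x f₁ ≠ 0) (h₂ : ∃ x ∈ S, eval x f₂ ≠ 0) :
    ∃ x ∈ S, eval x f₁ ≠ 0 ∧ eval x f₂ ≠ 0 := by
  by_contra! hcon
  obtain ⟨x₁, hx₁, hf₁⟩ := h₁
  obtain ⟨x₂, hx₂, hf₂⟩ := h₂
  have := hS.2.2 {x | ∀ q ∈ ({f₁} : Set (MvPolynomial (Fin N) ℂ)), eval x q = 0}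
    {x | ∀ q ∈ ({f₂} : Set (MvPolynomial (Fin N) ℂ)), eval x q = 0} ⟨_, rfl⟩ ⟨_, rfl⟩
    (fun x hx => by
      by_cases h : eval x f₁ = 0
      · left; intro q hq; rw [Set.mem_singleton_iff.1 hq]; exact h
      · right; intro q hq; rw [Set.mem_singleton_iff.1 hq]; exact hcon x hx h)
  rcases this with h | h
  · exact hf₁ (h hx₁ _ rfl)
  · exact hf₂ (h hx₂ _ rfl)

/-- Restriction of a polynomial on tuples to one slot. -/
theorem tl_slot {N m : ℕ} (q : Fin m → Fin N → ℂ) (a : Fin m)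
    (F : MvPolynomial (Fin m × Fin N) ℂ) :
    ∃ f : MvPolynomial (Fin N) ℂ, ∀ z, eval z f =
      eval (fun p => Function.update q a z p.1 p.2) F := by
  refine ⟨aeval (fun p => if p.1 = a then X p.2 else C (q p.1 p.2)) F, fun z => ?_⟩
  rw [← tl_eval_aeval]
  congr 2
  ext p
  by_cases h : p.1 = a <;> simp [h, Function.update_apply]

theorem tl_prod {N m : ℕ} (S : Set (Fin N → ℂ)) (hS : IrrAlg S)
    (F₁ F₂ : MvPolynomial (Fin m × Fin N) ℂ)
    (h₁ : ∃ q : Fin m → Fin N → ℂ, (∀ i, q i ∈ S) ∧ eval (fun p => q p.1 p.2) F₁ ≠ 0)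
    (h₂ : ∃ q : Fin m → Fin N → ℂ, (∀ i, q i ∈ S) ∧ eval (fun p => q p.1 p.2) F₂ ≠ 0) :
    ∃ q : Fin m → Fin N → ℂ, (∀ i, q i ∈ S) ∧ eval (fun p => q p.1 p.2) F₁ ≠ 0 ∧
      eval (fun p => q p.1 p.2) F₂ ≠ 0 := by
  have key : ∀ s : Finset (Fin m), ∃ q₁ q₂ : Fin m → Fin N → ℂ, (∀ i, q₁ i ∈ S) ∧ (∀ i, q₂ i ∈ S) ∧
      eval (fun p => q₁ p.1 p.2) F₁ ≠ 0 ∧ eval (fun p => q₂ p.1 p.2) F₂ ≠ 0 ∧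
      ∀ i ∈ s, q₁ i = q₂ i := by
    intro s
    induction s using Finset.induction_on with
    | empty =>
      obtain ⟨q₁, hq₁, e₁⟩ := h₁
      obtain ⟨q₂, hq₂, e₂⟩ := h₂
      exact ⟨q₁, q₂, hq₁, hq₂, e₁, e₂, by simp⟩
    | insert a s ha ih =>
      obtain ⟨q₁, q₂, hq₁, hq₂, e₁, e₂, he⟩ := ih
      obtain ⟨f₁, hf₁⟩ := tl_slot q₁ a F₁
      obtain ⟨f₂, hf₂⟩ := tl_slot q₂ a F₂
      obtain ⟨z, hz, hz₁, hz₂⟩ := tl_irr S hS f₁ f₂ ⟨q₁ a, hq₁ a, by simpa [hf₁] using e₁⟩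
        ⟨q₂ a, hq₂ a, by simpa [hf₂] using e₂⟩
      have hup : ∀ q : Fin m → Fin N → ℂ, (∀ i, q i ∈ S) → ∀ i, Function.update q a z i ∈ S := by
        intro q hq i
        by_cases h : i = a
        · subst h; simpa using hz
        · simpa [h] using hq i
      refine ⟨Function.update q₁ a z, Function.update q₂ a z, hup _ hq₁, hup _ hq₂,
        by rwa [← hf₁], by rwa [← hf₂], ?_⟩
      intro i hi
      by_cases h : i = a
      · subst h; simp
      · simpa [h] using he i (Finset.mem_of_mem_insert_of_ne hi h)
  obtain ⟨q₁, q₂, hq₁, -, e₁, e₂, he⟩ := key Finset.univ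
  obtain rfl : q₁ = q₂ := funext fun i => he i (Finset.mem_univ i)
  exact ⟨q₁, hq₁, e₁, e₂⟩

/-- The vanishing ideal of the power of `S`. -/
def tlIdeal {N : ℕ} (m : ℕ) (S : Set (Fin N → ℂ)) : Ideal (MvPolynomial (Fin m × Fin N) ℂ) where
  carrier := {F | ∀ q : Fin m → Fin N → ℂ, (∀ i, q i ∈ S) → eval (fun p => q p.1 p.2) F = 0}
  add_mem' := by
    intro a b ha hb q hq
    rw [map_add, ha q hq, hb q hq, add_zero]
  zero_mem' := by intro q _; simp
  smul_mem' := by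
    intro c a ha q hq
    rw [smul_eq_mul, map_mul, ha q hq, mul_zero]

theorem tl_prime {N : ℕ} (m : ℕ) (S : Set (Fin N → ℂ)) (hS : IrrAlg S) :
    (tlIdeal m S).IsPrime := by
  constructor
  · intro h
    obtain ⟨x, hx⟩ := hS.2.1
    have h1 : (1 : MvPolynomial (Fin m × Fin N) ℂ) ∈ tlIdeal m S := by rw [h]; trivial
    simpa using h1 (fun _ => x) (fun _ => hx)
  · intro F G hFG
    by_contra! hcon
    obtain ⟨hF, hG⟩ := hcon
    have unf : ∀ H, H ∉ tlIdeal m S → ∃ q : Fin m → Fin N → ℂ, (∀ i, q i ∈ S) ∧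
        eval (fun p => q p.1 p.2) H ≠ 0 := by
      intro H hH
      by_contra! h
      exact hH h
    obtain ⟨q, hq, e₁, e₂⟩ := tl_prod S hS F G (unf F hF) (unf G hG)
    have := hFG q hq
    rw [map_mul] at this
    exact (mul_ne_zero e₁ e₂) this

theorem tl_scale {N : ℕ} (S : Set (Fin N → ℂ)) (hc : IsCone S) (c : ℂ) (h0 : c ≠ 0)
    (p : Fin N → ℂ) : embTangent S (c • p) ⊆ embTangent S p := by
  intro v hv f hf
  obtain ⟨f', h1, h2⟩ := tl_aff c⁻¹ 0 f
  have := hv f' (fun y hy => by rw [h1, add_zero]; exact hf _ (hc.2 _ _ hy))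
  simp only [h2, add_zero, smul_smul, inv_mul_cancel₀ h0, one_smul] at this
  have h3 : c⁻¹ * ∑ i, v i * eval p (pderiv i f) = 0 := by
    rw [← this, Finset.mul_sum]
    exact Finset.sum_congr rfl fun _ _ => by ring
  exact (mul_eq_zero.1 h3).resolve_left (inv_ne_zero h0)

/-- The easy inclusion. -/
theorem tl_easy {N k : ℕ} (S : Set (Fin N → ℂ)) (hc : IsCone S) (p : Fin (k+1) → Fin N → ℂ)
    (hp : ∀ i, p i ∈ S) (c : Fin (k+1) → ℂ) (h0 : ∀ i, c i ≠ 0) (i : Fin (k+1)) :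
    embTangent S (p i) ⊆ embTangent (secant k S) (∑ j, c j • p j) := by
  intro v hv f hf
  rw [tl_secant] at hf
  obtain ⟨f', h1, h2⟩ := tl_aff (c i) (∑ j ∈ Finset.univ.erase i, c j • p j) f
  have hsum : ∑ j, c j • p j = c i • p i + ∑ j ∈ Finset.univ.erase i, c j • p j :=
    (Finset.add_sum_erase _ _ (Finset.mem_univ i)).symm
  have := hv f' (fun y hy => by
    rw [h1]
    have h3 := hf (Function.update (fun j => c j • p j) i (c i • y)) (fun j => by
      by_cases h : j = i
      · subst h; simpa using hc.2 _ _ hy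
      · simpa [h] using hc.2 _ _ (hp j))
    rw [← Finset.add_sum_erase _ _ (Finset.mem_univ i)] at h3
    rw [Function.update_self, Finset.sum_congr rfl (g := fun j => c j • p j)] at h3
    · exact h3
    · intro j hj
      rw [Function.update_of_ne (Finset.ne_of_mem_erase hj)])
  simp only [h2, ← hsum] at this
  have h3 : c i * ∑ j, v j * eval (∑ j, c j • p j) (pderiv j f) = 0 := by
    rw [← this, Finset.mul_sum]
    exact Finset.sum_congr rfl fun _ _ => by ring
  exact (mul_eq_zero.1 h3).resolve_left (h0 i)

/-- The hard inclusion, at a general tuple. -/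
theorem tl_hard {N k : ℕ} (S : Set (Fin N → ℂ)) (hS : IrrAlg S) :
    ∃ d ∉ tlIdeal (k+1) S, ∀ q : Fin (k+1) → Fin N → ℂ, (∀ i, q i ∈ S) →
      eval (fun p => q p.1 p.2) d ≠ 0 →
      embTangent (secant k S) (∑ i, q i) ⊆
        (Submodule.span ℂ (⋃ i, embTangent S (q i)) : Set (Fin N → ℂ)) := by
  have := tl_prime (k+1) S hS
  let g : Fin N → MvPolynomial (Fin (k+1) × Fin N) ℂ := fun i => ∑ a, X (a, i)
  obtain ⟨d, hd, h⟩ := tl_gensmooth (tlIdeal (k+1) S) g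
  refine ⟨d, hd, fun q hq hdq w hw => ?_⟩
  have hg : ∀ q : Fin (k+1) → Fin N → ℂ,
      (fun i => eval (fun p : Fin (k+1) × Fin N => q p.1 p.2) (g i)) = ∑ i, q i := by
    intro q; ext i; simp [g]
  obtain ⟨v, hv1, hv2⟩ := h (fun p => q p.1 p.2) (fun F hF => hF q hq) hdq w (fun f hf => by
    rw [hg]
    refine hw f ((tl_secant S k f).2 fun q' hq' => ?_)
    have := hf q' hq'
    rwa [← tl_eval_aeval, hg] at this)
  have hwv : w = ∑ a, fun i => v (a, i) := by
    ext i
    rw [← hv2 i, Finset.sum_apply, Fintype.sum_prod_type]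
    refine Finset.sum_congr rfl fun a _ => ?_
    simp only [g, map_sum, pderiv_X]
    rw [Finset.sum_eq_single i]
    · rw [Finset.sum_eq_single a]
      · simp
      · intro b _ hb; simp [Pi.single_apply, hb]
      · simp
    · intro j _ hj; simp [Pi.single_apply, hj.symm]
    · simp
  rw [hwv]
  refine Submodule.sum_mem _ fun a _ => Submodule.subset_span (Set.mem_iUnion.2 ⟨a, ?_⟩)
  intro f hf
  have h1 := hv1 (aeval (fun j => X (a, j)) f) (fun q' hq' => by
    rw [← tl_eval_aeval]
    simpa using hf _ (hq' a))
  rw [← h1, Fintype.sum_prod_type, Finset.sum_eq_single a]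
  · refine Finset.sum_congr rfl fun j _ => ?_
    rw [tl_chain, Finset.sum_eq_single j]
    · simp
    · intro i _ hi; simp [pderiv_X, Pi.single_apply, hi]
    · simp
  · intro b _ hb
    refine Finset.sum_eq_zero fun j _ => ?_
    rw [tl_chain, Finset.sum_eq_zero, mul_zero]
    intro i _
    simp [pderiv_X, Pi.single_apply, hb.symm]
  · simp

/-- Terracini's Lemma: for general points `p_0,…,p_k` of an
irreducible variety `X` and a general point `x` of their span, the tangent
space of `S^k(X)` at `x` is the span of the tangent spaces `T_{X,p_i}`. -/
theorem terracini (r n k : ℕ) (X : Set (Fin (r+1) → ℂ))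
    (hX : IrrAlg X) (hc : IsCone X) (hne : X ≠ {0}) (hdim : pdim X = nn n) :
    Generically (k+1) X fun p =>
      ∃ C : Set (Fin (r+1) → ℂ), IsAlg C ∧
        ¬ ((Submodule.span ℂ (Set.range p) : Set (Fin (r+1) → ℂ)) ⊆ C) ∧
        ∀ x ∈ Submodule.span ℂ (Set.range p), x ∉ C →
          tanSpan (secant k X) x = Submodule.span ℂ (⋃ i, embTangent X (p i)) := by
  obtain ⟨d, hd, hhard⟩ := tl_hard (k := k) X hX
  refine ⟨{q | ∀ f ∈ ({d} : Set (MvPolynomial (Fin (k+1) × Fin (r+1)) ℂ)),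
    eval (fun p => q p.1 p.2) f = 0}, ⟨_, rfl⟩, fun h => hd fun q hq => h hq d rfl, ?_⟩
  intro p hp hpB
  have hdp : eval (fun z => p z.1 z.2) d ≠ 0 := by
    intro h
    refine hpB fun f hf => ?_
    rw [Set.mem_singleton_iff.1 hf]
    exact h
  let T : (Fin (k+1) → ℂ) →ₗ[ℂ] (Fin (r+1) → ℂ) := Fintype.linearCombination ℂ p
  have hT : ∀ c, T c = ∑ i, c i • p i := fun c => Fintype.linearCombination_apply ℂ p c
  have hrange : ∀ x, x ∈ Submodule.span ℂ (Set.range p) ↔ x ∈ LinearMap.range T := by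
    intro x
    rw [← Fintype.range_linearCombination ℂ p]
  obtain ⟨s0, hs0⟩ := LinearMap.exists_rightInverse_of_surjective T.rangeRestrict
    T.range_rangeRestrict
  obtain ⟨s, hs⟩ := LinearMap.exists_extend s0
  have hTs : ∀ x ∈ LinearMap.range T, T (s x) = x := by
    intro x hx
    have h1 : s x = s0 ⟨x, hx⟩ := LinearMap.congr_fun hs ⟨x, hx⟩
    have h2 := LinearMap.congr_fun hs0 ⟨x, hx⟩
    rw [h1]
    exact congrArg Subtype.val h2
  let one : Fin (k+1) → ℂ := fun _ => 1
  let κ : Fin (k+1) → ℂ := one - s (T one)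
  have hκ : T κ = 0 := by
    simp only [κ, map_sub]
    rw [hTs _ ⟨one, rfl⟩, sub_self]
  let l : Fin (k+1) → MvPolynomial (Fin (r+1)) ℂ := fun a =>
    ∑ i, C (s (Pi.single i 1) a) * MvPolynomial.X i + C (κ a)
  have hl : ∀ x a, eval x (l a) = (s x + κ) a := by
    intro x a
    have h1 : s x = ∑ i, x i • s (Pi.single i 1) := by
      conv_lhs => rw [pi_eq_sum_univ' x]
      rw [map_sum]
      refine Finset.sum_congr rfl fun i _ => ?_
      rw [map_smul]
    simp [l, h1, mul_comm]
  let H : MvPolynomial (Fin (r+1)) ℂ :=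
    aeval (fun z : Fin (k+1) × Fin (r+1) => l z.1 * C (p z.1 z.2)) d * ∏ a, l a
  have hH : ∀ x, eval x H =
      eval (fun z => ((s x + κ) z.1 • p z.1) z.2) d * ∏ a, (s x + κ) a := by
    intro x
    simp only [H]
    rw [map_mul, ← tl_eval_aeval, map_prod]
    simp only [hl, map_mul, eval_C, Pi.smul_apply, smul_eq_mul]
  refine ⟨{x | ∀ f ∈ ({H} : Set (MvPolynomial (Fin (r+1)) ℂ)), eval x f = 0}, ⟨_, rfl⟩, ?_, ?_⟩
  · intro h
    have h1 := h ((hrange (T one)).2 ⟨one, rfl⟩) H rfl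
    rw [hH] at h1
    have h2 : s (T one) + κ = one := by simp [κ]
    rw [h2] at h1
    simp only [one, one_smul, Finset.prod_const_one, mul_one] at h1
    exact hdp h1
  · intro x hx hxC
    have hHx : eval x H ≠ 0 := by
      intro h
      refine hxC fun f hf => ?_
      rw [Set.mem_singleton_iff.1 hf]
      exact h
    rw [hH] at hHx
    obtain ⟨hdx, hprod⟩ := mul_ne_zero_iff.1 hHx
    have hc0 : ∀ a, (s x + κ) a ≠ 0 := fun a => Finset.prod_ne_zero_iff.1 hprod a (Finset.mem_univ a)
    have hxs : x = ∑ a, (s x + κ) a • p a := by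
      rw [← hT, map_add, hκ, add_zero, hTs x ((hrange x).1 hx)]
    have hE := fun i => tl_easy X hc p (fun i => (hp i).1) (s x + κ) hc0 i
    have hA := hhard (fun a => (s x + κ) a • p a) (fun a => hc.2 _ _ (hp a).1) hdx
    rw [← hxs] at hA
    simp only [← hxs] at hE
    apply le_antisymm
    · refine Submodule.span_le.2 (hA.trans ?_)
      exact Submodule.span_mono (Set.iUnion_mono fun i => tl_scale X hc _ (hc0 i) _)
    · exact Submodule.span_mono (Set.iUnion_subset hE)
end
end
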